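/- Let n ≥ 4, let {J_α : 1 ≤ α ≤ (n−1)(n−2)/2} be an orthonormal basis of so(n−1), let A be a skew-symmetric real (n+1)×(n+1) matrix orthogonal to so(n−1) ⊕ so(2) with respect to ⟨A, B⟩ = Tr(A Bᵀ) (equivalently, A_{ij} = 0 whenever both i, j ≤ n−1 and whenever both i, j ∈ {n, n+1}), and for each α let c_α ∈ ℝ^{n+1} be a vector whose last two coordinates vanish. If there is a nonempty relatively open subset U of M consisting of points with x̄ ≠ 0 such that ⟨[A, J_α] x + c_α, ν(x)⟩ = 0 for every x ∈ U and every α (where [A, J_α] = A J_α − J_α A), then A = 0 and c_α = 0 for every α. -/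

import Mathlib

open Matrix

/-- Membership in `so(n−1) ⊂ so(n+1)`: skew-symmetric real `(n+1)×(n+1)` matrices whose
entries vanish outside the top-left `(n−1)×(n−1)` block. -/
def memSOnm1 (n : ℕ) (A : Matrix (Fin (n + 1)) (Fin (n + 1)) ℝ) : Prop :=
  Aᵀ = -A ∧ ∀ i j : Fin (n + 1), (n - 1 ≤ (i : ℕ) ∨ n - 1 ≤ (j : ℕ)) → A i j = 0

/-- `|x̄|`, the norm of the first `n−1` coordinates of `x ∈ ℝ^{n+1}`. -/
noncomputable def rbar (n : ℕ) (x : Fin (n + 1) → ℝ) : ℝ :=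
  Real.sqrt (∑ i ∈ Finset.univ.filter (fun i : Fin (n + 1) => (i : ℕ) < n - 1), (x i) ^ 2)

/-- The hypersurface `Bowl^{n−1} × ℝ = {(x̄, u(|x̄|), x_{n+1})} ⊂ ℝ^{n+1}`, i.e. the graph
condition that the `n`-th coordinate (index `n−1` in `0`-based `Fin (n+1)`) equals
`u(|x̄|)`. -/
def bowlTimesR (n : ℕ) (u : ℝ → ℝ) : Set (Fin (n + 1) → ℝ) :=
  {x | x ⟨n - 1, by omega⟩ = u (rbar n x)}

/-!
Parametrise `M` by `(ξ, z) ↦ (ξ, u(‖ξ‖), z)` with `ξ ∈ ℝ^{n-1}`. For `J ∈ so(n-1)` put `a = J A_n`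
and `b = J A_{n+1}`, where `A_n` and `A_{n+1}` are the last two columns of `A`. Tangency of
`[A, J] x + c` to `M` then reads
`u'(‖ξ‖) (⟨c, ξ⟩ - u(‖ξ‖) ⟨a, ξ⟩ - z ⟨b, ξ⟩) = ‖ξ‖ ⟨a, ξ⟩` on an open set of pairs `(ξ, z)`.

Varying `z` gives `u' ⟨b, ξ⟩ = 0`. Along a ray on which `⟨a, ξ⟩ ≠ 0` we would have
`(K - u) u' = r` for a constant `K`; differentiating and inserting the ODE
`u'' / (1 + u'²) + κ u' / r = 1` gives `(κ + 1) u' = r`, and differentiating once more yields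
`r u'² = 0`, which is absurd. So `a = 0`, what remains is `u' ⟨c, ξ⟩ = 0`, and `u'` cannot vanish on
an interval, whence `b = c = 0`. Finally, `J A_n = J A_{n+1} = 0` for all `J ∈ so(n-1)` forces
`A = 0`, because the only vector of `ℝ^{n-1}` killed by all of `so(n-1)` is `0`.
-/

open Filter Topology
open scoped RealInnerProductSpace

/-- `u` solves the ODE of rotationally symmetric translating solitons on the open set `I` of radii,
with first and second derivatives `u'` and `u''`. The coefficient `κ` of the rotational principal
curvature is left free. -/
structure IsTranslatorProfileOn (κ : ℝ) (u u' u'' : ℝ → ℝ) (I : Set ℝ) : Prop where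
  isOpen : IsOpen I
  pos : ∀ r ∈ I, 0 < r
  hasDerivAt : ∀ r ∈ I, HasDerivAt u (u' r) r
  hasDerivAt_deriv : ∀ r ∈ I, HasDerivAt u' (u'' r) r
  ode : ∀ r ∈ I, u'' r / (1 + u' r ^ 2) + κ * u' r / r = 1

namespace IsTranslatorProfileOn

theorem of_contDiffOn_Ici {κ : ℝ} {u : ℝ → ℝ} (hu : ContDiffOn ℝ 2 u (Set.Ici 0))
    (ode : ∀ r > (0 : ℝ),
      derivWithin (derivWithin u (Set.Ici 0)) (Set.Ici 0) r / (1 + derivWithin u (Set.Ici 0) r ^ 2)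
        + κ * derivWithin u (Set.Ici 0) r / r = 1) :
    IsTranslatorProfileOn κ u (derivWithin u (Set.Ici 0))
      (derivWithin (derivWithin u (Set.Ici 0)) (Set.Ici 0)) (Set.Ioi 0) where
  isOpen := isOpen_Ioi
  pos _ hr := hr
  hasDerivAt r (hr : 0 < r) :=
    (hu.differentiableOn two_ne_zero r hr.le).hasDerivWithinAt.hasDerivAt (Ici_mem_nhds hr)
  hasDerivAt_deriv r (hr : 0 < r) :=
    ((hu.derivWithin (m := 1) (uniqueDiffOn_Ici 0) one_add_one_eq_two.le).differentiableOn
      one_ne_zero r hr.le).hasDerivWithinAt.hasDerivAt (Ici_mem_nhds hr)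
  ode := ode

variable {κ : ℝ} {u u' u'' : ℝ → ℝ} {I : Set ℝ}

theorem continuousOn (hu : IsTranslatorProfileOn κ u u' u'' I) : ContinuousOn u I :=
  fun r hr => (hu.hasDerivAt r hr).continuousAt.continuousWithinAt

theorem not_eventually_deriv_eq_zero (hu : IsTranslatorProfileOn κ u u' u'' I) {r : ℝ}
    (hr : r ∈ I) : ¬ ∀ᶠ s in 𝓝 r, u' s = 0 := by
  intro hzero
  have hsecond : u'' r = 0 :=
    (hu.hasDerivAt_deriv r hr).unique ((hasDerivAt_const r (0 : ℝ)).congr_of_eventuallyEq hzero)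
  simpa [hsecond, hzero.self_of_nhds] using hu.ode r hr

theorem mul_second_deriv_eq_of_eventually (hu : IsTranslatorProfileOn κ u u' u'' I) {r K : ℝ}
    (hr : r ∈ I) (hK : ∀ᶠ s in 𝓝 r, (K - u s) * u' s = s) :
    r * u'' r = u' r * (1 + u' r ^ 2) := by
  have hderiv : -u' r * u' r + (K - u r) * u'' r = 1 :=
    (((hu.hasDerivAt r hr).const_sub K).mul (hu.hasDerivAt_deriv r hr)).unique
      ((hasDerivAt_id r).congr_of_eventuallyEq hK)
  linear_combination u' r * hderiv - u'' r * hK.self_of_nhds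

theorem not_eventually_const_sub_mul_deriv_eq (hu : IsTranslatorProfileOn κ u u' u'' I) {r : ℝ}
    (hr : r ∈ I) (K : ℝ) : ¬ ∀ᶠ s in 𝓝 r, (K - u s) * u' s = s := by
  intro hK
  have hlinear : ∀ᶠ s in 𝓝 r, (κ + 1) * u' s = s := by
    filter_upwards [hK.eventually_nhds, hu.isOpen.mem_nhds hr] with s hKs hs
    have hsecond := hu.mul_second_deriv_eq_of_eventually hs hKs
    have hode := hu.ode s hs
    have hs0 := (hu.pos s hs).ne'
    have hden : 1 + u' s ^ 2 ≠ 0 := by positivity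
    field_simp at hode
    refine mul_left_cancel₀ hden ?_
    linear_combination hode - hsecond
  have hslope : (κ + 1) * u'' r = 1 :=
    ((hu.hasDerivAt_deriv r hr).const_mul (κ + 1)).unique
      ((hasDerivAt_id r).congr_of_eventuallyEq hlinear)
  have hsq : r * u' r ^ 2 = 0 := by
    linear_combination r * hslope
      - (κ + 1) * hu.mul_second_deriv_eq_of_eventually hr hK
      - (1 + u' r ^ 2) * hlinear.self_of_nhds
  have hr0 := (hu.pos r hr).ne'
  have hderiv : u' r = 0 := pow_eq_zero_iff two_ne_zero |>.mp ((mul_eq_zero_iff_left hr0).mp hsq)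
  exact hr0 (by rw [← hK.self_of_nhds, hderiv, mul_zero])

end IsTranslatorProfileOn

section NormedSpace

variable {E : Type*} [NormedAddCommGroup E] [NormedSpace ℝ E]

theorem linearMap_eq_zero_of_isOpen {S : Set E} (hS : IsOpen S) (hne : S.Nonempty)
    {f : E →ₗ[ℝ] ℝ} (hf : ∀ ξ ∈ S, f ξ = 0) : f = 0 := by
  rw [← LinearMap.ker_eq_top]
  exact Submodule.eq_top_of_nonempty_interior' _ (hne.mono (interior_maximal hf hS))

theorem norm_div_norm_smul {ξ : E} (hξ : ξ ≠ 0) {s : ℝ} (hs : 0 ≤ s) : ‖(s / ‖ξ‖) • ξ‖ = s := by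
  rw [norm_smul, Real.norm_of_nonneg (by positivity), div_mul_cancel₀ _ (norm_ne_zero_iff.mpr hξ)]

theorem eventually_div_norm_smul_mem {S : Set E} (hS : IsOpen S) {ξ : E} (hξS : ξ ∈ S)
    (hξ : ξ ≠ 0) : ∀ᶠ s in 𝓝 ‖ξ‖, (s / ‖ξ‖) • ξ ∈ S := by
  have hcont : ContinuousAt (fun s : ℝ => (s / ‖ξ‖) • ξ) ‖ξ‖ := by fun_prop
  refine hcont.eventually_mem (hS.mem_nhds ?_)
  rwa [div_self (norm_ne_zero_iff.mpr hξ), one_smul]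

namespace IsTranslatorProfileOn

variable {κ : ℝ} {u u' u'' : ℝ → ℝ} {I : Set ℝ} {S : Set E}

theorem eq_zero_of_deriv_norm_mul_eq_zero (hu : IsTranslatorProfileOn κ u u' u'' I)
    (hS : IsOpen S) (hne : S.Nonempty) (hSI : ∀ ξ ∈ S, ‖ξ‖ ∈ I) {f : E →ₗ[ℝ] ℝ}
    (hf : ∀ ξ ∈ S, u' ‖ξ‖ * f ξ = 0) : f = 0 := by
  refine linearMap_eq_zero_of_isOpen hS hne fun ξ hξ => ?_
  by_contra hfξ
  have hpos := hu.pos _ (hSI ξ hξ)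
  refine hu.not_eventually_deriv_eq_zero (hSI ξ hξ) ?_
  filter_upwards [eventually_div_norm_smul_mem hS hξ (norm_pos_iff.mp hpos), lt_mem_nhds hpos]
    with s hs hs0
  have hray := hf _ hs
  rw [norm_div_norm_smul (norm_pos_iff.mp hpos) hs0.le, map_smul, smul_eq_mul] at hray
  exact (mul_eq_zero.mp hray).resolve_right (mul_ne_zero (div_pos hs0 hpos).ne' hfξ)

theorem eq_zero_of_deriv_norm_mul_sub_eq (hu : IsTranslatorProfileOn κ u u' u'' I)
    (hS : IsOpen S) (hne : S.Nonempty) (hSI : ∀ ξ ∈ S, ‖ξ‖ ∈ I) {a c : E →ₗ[ℝ] ℝ}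
    (h : ∀ ξ ∈ S, u' ‖ξ‖ * (c ξ - u ‖ξ‖ * a ξ) = ‖ξ‖ * a ξ) : a = 0 := by
  refine linearMap_eq_zero_of_isOpen hS hne fun ξ hξ => ?_
  by_contra haξ
  have hpos := hu.pos _ (hSI ξ hξ)
  refine hu.not_eventually_const_sub_mul_deriv_eq (hSI ξ hξ) (c ξ / a ξ) ?_
  filter_upwards [eventually_div_norm_smul_mem hS hξ (norm_pos_iff.mp hpos), lt_mem_nhds hpos]
    with s hs hs0
  have hray := h _ hs
  simp only [norm_div_norm_smul (norm_pos_iff.mp hpos) hs0.le, map_smul, smul_eq_mul] at hray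
  field_simp at hray ⊢
  linear_combination hray

theorem eq_zero_of_tangency (hu : IsTranslatorProfileOn κ u u' u'' I) {W : Set (E × ℝ)}
    (hW : IsOpen W) (hne : W.Nonempty) (hWI : ∀ p ∈ W, ‖p.1‖ ∈ I) {a b c : E →ₗ[ℝ] ℝ}
    (h : ∀ p ∈ W, u' ‖p.1‖ * (c p.1 - u ‖p.1‖ * a p.1 - p.2 * b p.1) = ‖p.1‖ * a p.1) :
    a = 0 ∧ b = 0 ∧ c = 0 := by
  have hS : IsOpen (Prod.fst '' W) := isOpenMap_fst W hW
  have hSI : ∀ ξ ∈ Prod.fst '' W, ‖ξ‖ ∈ I := Set.forall_mem_image.mpr hWI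
  have hshift : ∀ p ∈ W, ∃ z, z ≠ p.2 ∧ (p.1, z) ∈ W := fun p hp => by
    have hslice : ∀ᶠ z in 𝓝 p.2, (p.1, z) ∈ W :=
      (Continuous.prodMk_right p.1).continuousAt.eventually_mem (hW.mem_nhds hp)
    exact (eventually_mem_nhdsWithin.and (hslice.filter_mono nhdsWithin_le_nhds)).exists
      (f := 𝓝[≠] p.2)
  have hb : ∀ p ∈ W, u' ‖p.1‖ * b p.1 = 0 := fun p hp => by
    obtain ⟨z, hz, hzW⟩ := hshift p hp
    refine (mul_eq_zero_iff_left (sub_ne_zero.mpr hz)).mp ?_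
    linear_combination h p hp - h _ hzW
  have ha : a = 0 := hu.eq_zero_of_deriv_norm_mul_sub_eq hS (hne.image _) hSI (c := c) <|
    Set.forall_mem_image.mpr fun p hp => by linear_combination h p hp + p.2 * hb p hp
  subst ha
  refine ⟨rfl, hu.eq_zero_of_deriv_norm_mul_eq_zero hS (hne.image _) hSI
      (Set.forall_mem_image.mpr hb),
    hu.eq_zero_of_deriv_norm_mul_eq_zero hS (hne.image _) hSI <|
      Set.forall_mem_image.mpr fun p hp => ?_⟩
  have hp' := h p hp
  simp only [LinearMap.zero_apply, mul_zero, sub_zero] at hp'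
  linear_combination hp' + p.2 * hb p hp

end IsTranslatorProfileOn

end NormedSpace

theorem IsTranslatorProfileOn.eq_zero_of_inner_tangency {E : Type*} [NormedAddCommGroup E]
    [InnerProductSpace ℝ E] {κ : ℝ} {u u' u'' : ℝ → ℝ} {I : Set ℝ}
    (hu : IsTranslatorProfileOn κ u u' u'' I) {W : Set (E × ℝ)} (hW : IsOpen W) (hne : W.Nonempty)
    (hWI : ∀ p ∈ W, ‖p.1‖ ∈ I) {a b c : E}
    (h : ∀ p ∈ W, u' ‖p.1‖ * (⟪c, p.1⟫ - u ‖p.1‖ * ⟪a, p.1⟫ - p.2 * ⟪b, p.1⟫) = ‖p.1‖ * ⟪a, p.1⟫) :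
    a = 0 ∧ b = 0 ∧ c = 0 := by
  have hinner : ∀ v : E, innerₗ E v = 0 → v = 0 := fun v hv => by
    rw [← inner_self_eq_zero (𝕜 := ℝ), ← innerₗ_apply_apply, hv, LinearMap.zero_apply]
  obtain ⟨ha, hb, hc⟩ := hu.eq_zero_of_tangency hW hne hWI (a := innerₗ E a) (b := innerₗ E b)
    (c := innerₗ E c) h
  exact ⟨hinner a ha, hinner b hb, hinner c hc⟩

/-- The space `ℝ^{n-1}` of vectors `x̄`, with the Euclidean norm; it is indexed by the
first `n - 1` indices of `ℝ^{n+1}`, so that no reindexing is needed. -/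
abbrev HorizontalSpace (n : ℕ) : Type := EuclideanSpace ℝ {i : Fin (n + 1) // (i : ℕ) < n - 1}

/-- The projection `x ↦ x̄`. -/
def horizontal (n : ℕ) : (Fin (n + 1) → ℝ) →ₗ[ℝ] HorizontalSpace n where
  toFun x := WithLp.toLp 2 fun i => x i
  map_add' _ _ := rfl
  map_smul' _ _ := rfl

/-- The index of the coordinate `x_n` of `ℝ^{n+1}`, in whose direction `M` is a graph. -/
def heightIndex (n : ℕ) : Fin (n + 1) := ⟨n - 1, by omega⟩

section Coordinates

variable {n : ℕ}

@[simp]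
theorem horizontal_apply (x : Fin (n + 1) → ℝ) (i : {i : Fin (n + 1) // (i : ℕ) < n - 1}) :
    horizontal n x i = x i := rfl

theorem sum_filter_mul_eq_inner (v x : Fin (n + 1) → ℝ) :
    ∑ i ∈ Finset.univ.filter (fun i : Fin (n + 1) => (i : ℕ) < n - 1), v i * x i =
      ⟪horizontal n v, horizontal n x⟫ := by
  simp only [PiLp.inner_apply, horizontal_apply, RCLike.inner_apply', conj_trivial]
  exact Finset.sum_subtype _ (by simp) _

theorem norm_horizontal (x : Fin (n + 1) → ℝ) : ‖horizontal n x‖ = rbar n x := by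
  rw [norm_eq_sqrt_real_inner, ← sum_filter_mul_eq_inner, rbar]
  simp only [sq]

theorem dotProduct_eq_inner_horizontal {v : Fin (n + 1) → ℝ}
    (hv : ∀ i : Fin (n + 1), n - 1 ≤ (i : ℕ) → v i = 0) (x : Fin (n + 1) → ℝ) :
    v ⬝ᵥ x = ⟪horizontal n v, horizontal n x⟫ := by
  rw [← sum_filter_mul_eq_inner, dotProduct, Finset.sum_filter_of_ne]
  intro i _ hi
  contrapose! hi
  rw [hv i hi, zero_mul]

theorem eq_zero_of_horizontal_eq_zero {v : Fin (n + 1) → ℝ}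
    (hv : ∀ i : Fin (n + 1), n - 1 ≤ (i : ℕ) → v i = 0) (h : horizontal n v = 0) : v = 0 := by
  rw [← dotProduct_self_eq_zero, dotProduct_eq_inner_horizontal hv, h, inner_zero_left]

end Coordinates

/-- The graph parametrisation `(ξ, z) ↦ (ξ, u(‖ξ‖), z)` of `Bowl^{n-1} × ℝ`. -/
noncomputable def bowlPoint (n : ℕ) (u : ℝ → ℝ) (p : HorizontalSpace n × ℝ) : Fin (n + 1) → ℝ :=
  fun i => if h : (i : ℕ) < n - 1 then p.1 ⟨i, h⟩ else if i = heightIndex n then u ‖p.1‖ else p.2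

section BowlPoint

variable {n : ℕ} {u : ℝ → ℝ}

@[simp]
theorem horizontal_bowlPoint (p : HorizontalSpace n × ℝ) :
    horizontal n (bowlPoint n u p) = p.1 := by
  ext i
  simp [bowlPoint, i.2]

@[simp]
theorem rbar_bowlPoint (p : HorizontalSpace n × ℝ) : rbar n (bowlPoint n u p) = ‖p.1‖ := by
  rw [← norm_horizontal, horizontal_bowlPoint]

@[simp]
theorem bowlPoint_heightIndex (p : HorizontalSpace n × ℝ) :
    bowlPoint n u p (heightIndex n) = u ‖p.1‖ := by
  simp [bowlPoint, heightIndex]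

theorem heightIndex_ne_last (hn : n ≠ 0) : heightIndex n ≠ Fin.last n := by
  simp only [heightIndex, ne_eq, Fin.ext_iff, Fin.val_last]
  omega

theorem eq_heightIndex_or_eq_last {i : Fin (n + 1)} (hi : n - 1 ≤ (i : ℕ)) :
    i = heightIndex n ∨ i = Fin.last n := by
  simp only [heightIndex, Fin.ext_iff, Fin.val_last]
  omega

theorem bowlPoint_last (hn : n ≠ 0) (p : HorizontalSpace n × ℝ) :
    bowlPoint n u p (Fin.last n) = p.2 := by
  simp [bowlPoint, (heightIndex_ne_last hn).symm]

theorem bowlPoint_mem_bowlTimesR (p : HorizontalSpace n × ℝ) : bowlPoint n u p ∈ bowlTimesR n u :=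
  (bowlPoint_heightIndex p).trans (by rw [rbar_bowlPoint])

theorem bowlPoint_horizontal_last {x : Fin (n + 1) → ℝ} (hx : x ∈ bowlTimesR n u) :
    bowlPoint n u (horizontal n x, x (Fin.last n)) = x := by
  ext i
  rcases lt_or_ge (i : ℕ) (n - 1) with hi | hi
  · simp [bowlPoint, hi]
  · by_cases hi' : i = heightIndex n
    · subst hi'
      rw [bowlPoint_heightIndex, norm_horizontal]
      exact hx.symm
    · have hlast := (eq_heightIndex_or_eq_last hi).resolve_left hi'
      simp [bowlPoint, hi.not_gt, hi', ← hlast]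

theorem continuousOn_bowlPoint {I : Set ℝ} (hu : ContinuousOn u I) :
    ContinuousOn (bowlPoint n u) {p | ‖p.1‖ ∈ I} := by
  refine continuousOn_pi.mpr fun i => ?_
  unfold bowlPoint
  split_ifs with hi hi'
  · fun_prop
  · exact hu.comp (by fun_prop) fun p hp => hp
  · fun_prop

theorem isOpen_inter_preimage_bowlPoint {I : Set ℝ} (hI : IsOpen I) (hu : ContinuousOn u I)
    {V : Set (Fin (n + 1) → ℝ)} (hV : IsOpen V) :
    IsOpen ({p : HorizontalSpace n × ℝ | ‖p.1‖ ∈ I} ∩ bowlPoint n u ⁻¹' V) :=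
  (continuousOn_bowlPoint hu).isOpen_inter_preimage (hI.preimage (by fun_prop)) hV

end BowlPoint

/-- The component `⟨v, ν(x)⟩` of `v` along the unit normal `ν(x)` of `Bowl^{n-1} × ℝ`, where `m`
stands for the slope `u'(|x̄|)`. -/
noncomputable def bowlNormalComponent (n : ℕ) (m : ℝ) (x v : Fin (n + 1) → ℝ) : ℝ :=
  (Real.sqrt (1 + m ^ 2))⁻¹ *
    ((∑ i ∈ Finset.univ.filter (fun i : Fin (n + 1) => (i : ℕ) < n - 1),
        v i * (m * x i / rbar n x)) - v (heightIndex n))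

theorem bowlNormalComponent_eq_zero_iff {n : ℕ} {m : ℝ} {x v : Fin (n + 1) → ℝ}
    (hx : rbar n x ≠ 0) :
    bowlNormalComponent n m x v = 0 ↔
      m * ⟪horizontal n v, horizontal n x⟫ = rbar n x * v (heightIndex n) := by
  have hsqrt : (Real.sqrt (1 + m ^ 2))⁻¹ ≠ 0 := by positivity
  have hsum : ∑ i ∈ Finset.univ.filter (fun i : Fin (n + 1) => (i : ℕ) < n - 1),
      v i * (m * x i / rbar n x) = m * ⟪horizontal n v, horizontal n x⟫ / rbar n x := by
    rw [← sum_filter_mul_eq_inner, Finset.mul_sum, Finset.sum_div]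
    exact Finset.sum_congr rfl fun i _ => by ring
  rw [bowlNormalComponent, mul_eq_zero_iff_left hsqrt, hsum, sub_eq_zero, div_eq_iff hx,
    mul_comm (v _)]

section Bracket

variable {n : ℕ} {A J : Matrix (Fin (n + 1)) (Fin (n + 1)) ℝ}

namespace memSOnm1

theorem mulVec_apply_eq_zero (hJ : memSOnm1 n J) (v : Fin (n + 1) → ℝ) (i : Fin (n + 1))
    (hi : n - 1 ≤ (i : ℕ)) : (J *ᵥ v) i = 0 := by
  simp only [mulVec, dotProduct, hJ.2 i _ (Or.inl hi), zero_mul, Finset.sum_const_zero]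

theorem mulVec_congr (hJ : memSOnm1 n J) {v w : Fin (n + 1) → ℝ}
    (h : horizontal n v = horizontal n w) : J *ᵥ v = J *ᵥ w := by
  ext i
  simp only [mulVec, dotProduct]
  refine Finset.sum_congr rfl fun j _ => ?_
  rcases lt_or_ge (j : ℕ) (n - 1) with hj | hj
  · rw [show v j = w j from congr($h ⟨j, hj⟩)]
  · rw [hJ.2 i j (Or.inr hj), zero_mul, zero_mul]

theorem single_sub_single {i j : Fin (n + 1)} (hi : (i : ℕ) < n - 1) (hj : (j : ℕ) < n - 1) :
    memSOnm1 n (Matrix.single i j 1 - Matrix.single j i 1) := by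
  refine ⟨by simp [Matrix.transpose_single], fun k l hkl => ?_⟩
  have hij : ¬(i = k ∧ j = l) := by rintro ⟨rfl, rfl⟩; omega
  have hji : ¬(j = k ∧ i = l) := by rintro ⟨rfl, rfl⟩; omega
  simp [hij, hji]

end memSOnm1

theorem horizontal_eq_zero_of_forall_memSOnm1_mulVec (hn : 3 ≤ n) {v : Fin (n + 1) → ℝ}
    (hv : ∀ B, memSOnm1 n B → B *ᵥ v = 0) : horizontal n v = 0 := by
  ext ⟨j, hj⟩
  obtain ⟨i, hi, hij⟩ : ∃ i : Fin (n + 1), (i : ℕ) < n - 1 ∧ i ≠ j := by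
    by_cases h : (j : ℕ) = 0
    · exact ⟨⟨1, by omega⟩, Nat.lt_sub_of_add_lt hn, by simp [Fin.ext_iff, h]⟩
    · exact ⟨0, Nat.sub_pos_of_lt (by omega), fun h0 => h (by simp [← h0])⟩
  have hrow := congrFun (hv _ (memSOnm1.single_sub_single hi hj)) i
  simpa [Matrix.sub_mulVec, Matrix.single_mulVec, hij, Function.update_apply] using hrow

theorem horizontal_mulVec_of_topLeft_eq_zero (hn : n ≠ 0)
    (hA : ∀ i j : Fin (n + 1), (i : ℕ) < n - 1 → (j : ℕ) < n - 1 → A i j = 0)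
    (x : Fin (n + 1) → ℝ) :
    horizontal n (A *ᵥ x) =
      horizontal n (x (heightIndex n) • A.col (heightIndex n)
        + x (Fin.last n) • A.col (Fin.last n)) := by
  ext ⟨i, hi⟩
  have hsum : (A *ᵥ x) i =
      A i (heightIndex n) * x (heightIndex n) + A i (Fin.last n) * x (Fin.last n) := by
    rw [mulVec, dotProduct]
    refine Fintype.sum_eq_add _ _ (heightIndex_ne_last hn) fun j hj => ?_
    have hj' : (j : ℕ) < n - 1 := by
      by_contra! hle
      exact (eq_heightIndex_or_eq_last hle).elim hj.1 hj.2
    rw [hA i j hi hj', zero_mul]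
  simp [hsum, mul_comm]

theorem horizontal_bracket_mulVec (hn : n ≠ 0)
    (hA : ∀ i j : Fin (n + 1), (i : ℕ) < n - 1 → (j : ℕ) < n - 1 → A i j = 0)
    (hJ : memSOnm1 n J) (x : Fin (n + 1) → ℝ) :
    horizontal n ((A * J - J * A) *ᵥ x) =
      -(x (heightIndex n) • horizontal n (J *ᵥ A.col (heightIndex n))
        + x (Fin.last n) • horizontal n (J *ᵥ A.col (Fin.last n))) := by
  have hAJ : horizontal n (A *ᵥ (J *ᵥ x)) = 0 := by
    rw [horizontal_mulVec_of_topLeft_eq_zero hn hA, hJ.mulVec_apply_eq_zero x _ le_rfl,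
      hJ.mulVec_apply_eq_zero x _ (by simp)]
    simp
  rw [sub_mulVec, ← mulVec_mulVec, ← mulVec_mulVec, map_sub, hAJ, zero_sub,
    hJ.mulVec_congr (horizontal_mulVec_of_topLeft_eq_zero hn hA x)]
  simp only [mulVec_add, mulVec_smul, map_add, map_smul]

theorem bracket_mulVec_heightIndex (hA : Aᵀ = -A) (hJ : memSOnm1 n J) (x : Fin (n + 1) → ℝ) :
    ((A * J - J * A) *ᵥ x) (heightIndex n) =
      ⟪horizontal n (J *ᵥ A.col (heightIndex n)), horizontal n x⟫ := by
  have hrow : A (heightIndex n) = -A.col (heightIndex n) :=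
    funext fun k => congr($hA k (heightIndex n))
  calc ((A * J - J * A) *ᵥ x) (heightIndex n)
      = A (heightIndex n) ⬝ᵥ (J *ᵥ x) := by
        rw [sub_mulVec, ← mulVec_mulVec, ← mulVec_mulVec, Pi.sub_apply,
          hJ.mulVec_apply_eq_zero _ _ le_rfl, sub_zero, mulVec]
    _ = (J *ᵥ A.col (heightIndex n)) ⬝ᵥ x := by
        rw [hrow, dotProduct_mulVec, ← mulVec_transpose, hJ.1, neg_mulVec, mulVec_neg, neg_neg]
    _ = _ := dotProduct_eq_inner_horizontal (hJ.mulVec_apply_eq_zero _) x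

theorem bowlNormalComponent_bracket_eq_zero_iff (hn : n ≠ 0) (hAskew : Aᵀ = -A)
    (hA : ∀ i j : Fin (n + 1), (i : ℕ) < n - 1 → (j : ℕ) < n - 1 → A i j = 0)
    (hJ : memSOnm1 n J) {c : Fin (n + 1) → ℝ} (hc : c (heightIndex n) = 0) {m : ℝ}
    {x : Fin (n + 1) → ℝ} (hx : rbar n x ≠ 0) :
    bowlNormalComponent n m x ((A * J - J * A) *ᵥ x + c) = 0 ↔
      m * (⟪horizontal n c, horizontal n x⟫
          - x (heightIndex n) * ⟪horizontal n (J *ᵥ A.col (heightIndex n)), horizontal n x⟫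
          - x (Fin.last n) * ⟪horizontal n (J *ᵥ A.col (Fin.last n)), horizontal n x⟫) =
        rbar n x * ⟪horizontal n (J *ᵥ A.col (heightIndex n)), horizontal n x⟫ := by
  rw [bowlNormalComponent_eq_zero_iff hx, Pi.add_apply, hc, add_zero,
    bracket_mulVec_heightIndex hAskew hJ, map_add, horizontal_bracket_mulVec hn hA hJ]
  simp only [inner_add_left, inner_neg_left, real_inner_smul_left]
  ring_nf

theorem eq_zero_of_horizontal_col_eq_zero (hAskew : Aᵀ = -A)
    (hAperp : ∀ i j : Fin (n + 1),
      (((i : ℕ) < n - 1 ∧ (j : ℕ) < n - 1) ∨ (n - 1 ≤ (i : ℕ) ∧ n - 1 ≤ (j : ℕ))) → A i j = 0)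
    (hheight : horizontal n (A.col (heightIndex n)) = 0)
    (hlast : horizontal n (A.col (Fin.last n)) = 0) : A = 0 := by
  have hcol : ∀ i j : Fin (n + 1), (i : ℕ) < n - 1 → n - 1 ≤ (j : ℕ) → A i j = 0 := by
    intro i j hi hj
    rcases eq_heightIndex_or_eq_last hj with rfl | rfl
    · exact congr($hheight ⟨i, hi⟩)
    · exact congr($hlast ⟨i, hi⟩)
  ext i j
  rcases lt_or_ge (i : ℕ) (n - 1) with hi | hi <;> rcases lt_or_ge (j : ℕ) (n - 1) with hj | hj
  · exact hAperp i j (Or.inl ⟨hi, hj⟩)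
  · exact hcol i j hi hj
  · have hskew : A j i = -A i j := congr($hAskew i j)
    rw [Matrix.zero_apply, ← neg_eq_zero, ← hskew, hcol j i hj hi]
  · exact hAperp i j (Or.inr ⟨hi, hj⟩)

theorem horizontal_eq_zero_of_span_mulVec (hn : 3 ≤ n) {ι : Type*}
    {J : ι → Matrix (Fin (n + 1)) (Fin (n + 1)) ℝ}
    (hJspan : ∀ B, memSOnm1 n B → B ∈ Submodule.span ℝ (Set.range J)) {v : Fin (n + 1) → ℝ}
    (hv : ∀ α, J α *ᵥ v = 0) : horizontal n v = 0 := by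
  refine horizontal_eq_zero_of_forall_memSOnm1_mulVec hn fun B hB => ?_
  have hle : Submodule.span ℝ (Set.range J) ≤
      LinearMap.ker ((Matrix.mulVecBilin ℝ ℝ).flip v) :=
    Submodule.span_le.mpr (Set.range_subset_iff.mpr hv)
  exact hle (hJspan B hB)

theorem IsTranslatorProfileOn.eq_zero_of_bowlNormalComponent_bracket_eq_zero {κ : ℝ}
    {u u' u'' : ℝ → ℝ} {I : Set ℝ} (hu : IsTranslatorProfileOn κ u u' u'' I) (hn : n ≠ 0)
    (hAskew : Aᵀ = -A)
    (hA : ∀ i j : Fin (n + 1), (i : ℕ) < n - 1 → (j : ℕ) < n - 1 → A i j = 0)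
    (hJ : memSOnm1 n J) {c : Fin (n + 1) → ℝ}
    (hc : ∀ i : Fin (n + 1), n - 1 ≤ (i : ℕ) → c i = 0) {V : Set (Fin (n + 1) → ℝ)}
    (hV : IsOpen V) (hne : (V ∩ bowlTimesR n u).Nonempty)
    (hVI : ∀ x ∈ V ∩ bowlTimesR n u, rbar n x ∈ I)
    (hnormal : ∀ x ∈ V ∩ bowlTimesR n u,
      bowlNormalComponent n (u' (rbar n x)) x ((A * J - J * A) *ᵥ x + c) = 0) :
    J *ᵥ A.col (heightIndex n) = 0 ∧ J *ᵥ A.col (Fin.last n) = 0 ∧ c = 0 := by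
  have hne' : ({p | ‖p.1‖ ∈ I} ∩ bowlPoint n u ⁻¹' V).Nonempty := by
    obtain ⟨x, hx⟩ := hne
    refine ⟨(horizontal n x, x (Fin.last n)), ?_, ?_⟩
    · simpa only [Set.mem_ofPred_eq, norm_horizontal] using hVI x hx
    · simpa only [Set.mem_preimage, bowlPoint_horizontal_last hx.2] using hx.1
  have htangent : ∀ p ∈ {p | ‖p.1‖ ∈ I} ∩ bowlPoint n u ⁻¹' V,
      u' ‖p.1‖ * (⟪horizontal n c, p.1⟫
          - u ‖p.1‖ * ⟪horizontal n (J *ᵥ A.col (heightIndex n)), p.1⟫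
          - p.2 * ⟪horizontal n (J *ᵥ A.col (Fin.last n)), p.1⟫) =
        ‖p.1‖ * ⟪horizontal n (J *ᵥ A.col (heightIndex n)), p.1⟫ := fun p hp => by
    have hr : rbar n (bowlPoint n u p) ≠ 0 := by
      rw [rbar_bowlPoint]
      exact (hu.pos _ hp.1).ne'
    have hcomponent := hnormal _ ⟨hp.2, bowlPoint_mem_bowlTimesR p⟩
    rw [bowlNormalComponent_bracket_eq_zero_iff hn hAskew hA hJ (hc _ le_rfl) hr] at hcomponent
    simpa only [horizontal_bowlPoint, rbar_bowlPoint, bowlPoint_heightIndex, bowlPoint_last hn]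
      using hcomponent
  have hopen := isOpen_inter_preimage_bowlPoint (n := n) hu.isOpen hu.continuousOn hV
  obtain ⟨ha, hb, hc'⟩ := hu.eq_zero_of_inner_tangency hopen hne' (fun p hp => hp.1) htangent
  exact ⟨eq_zero_of_horizontal_eq_zero (hJ.mulVec_apply_eq_zero _) ha,
    eq_zero_of_horizontal_eq_zero (hJ.mulVec_apply_eq_zero _) hb,
    eq_zero_of_horizontal_eq_zero hc hc'⟩

end Bracket

theorem bowl_bracket_vector_fields_vanish_general {n : ℕ} (hn : 3 ≤ n) {κ : ℝ}
    {u u' u'' : ℝ → ℝ} {I : Set ℝ} (hu : IsTranslatorProfileOn κ u u' u'' I)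
    {ι : Type*} {J : ι → Matrix (Fin (n + 1)) (Fin (n + 1)) ℝ} (hJmem : ∀ α, memSOnm1 n (J α))
    (hJspan : ∀ B, memSOnm1 n B → B ∈ Submodule.span ℝ (Set.range J))
    {A : Matrix (Fin (n + 1)) (Fin (n + 1)) ℝ} (hAskew : Aᵀ = -A)
    (hAperp : ∀ i j : Fin (n + 1),
      (((i : ℕ) < n - 1 ∧ (j : ℕ) < n - 1) ∨ (n - 1 ≤ (i : ℕ) ∧ n - 1 ≤ (j : ℕ))) → A i j = 0)
    {c : ι → Fin (n + 1) → ℝ} (hc : ∀ α, ∀ i : Fin (n + 1), n - 1 ≤ (i : ℕ) → c α i = 0)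
    {V : Set (Fin (n + 1) → ℝ)} (hV : IsOpen V) (hne : (V ∩ bowlTimesR n u).Nonempty)
    (hVI : ∀ x ∈ V ∩ bowlTimesR n u, rbar n x ∈ I)
    (hnormal : ∀ x ∈ V ∩ bowlTimesR n u, ∀ α,
      bowlNormalComponent n (u' (rbar n x)) x ((A * J α - J α * A) *ᵥ x + c α) = 0) :
    A = 0 ∧ ∀ α, c α = 0 := by
  have hvanish : ∀ α, J α *ᵥ A.col (heightIndex n) = 0 ∧ J α *ᵥ A.col (Fin.last n) = 0 ∧
      c α = 0 := fun α =>
    hu.eq_zero_of_bowlNormalComponent_bracket_eq_zero (by omega) hAskew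
      (fun i j hi hj => hAperp i j (Or.inl ⟨hi, hj⟩)) (hJmem α) (hc α) hV hne hVI
      fun x hx => hnormal x hx α
  refine ⟨eq_zero_of_horizontal_col_eq_zero hAskew hAperp ?_ ?_, fun α => (hvanish α).2.2⟩
  · exact horizontal_eq_zero_of_span_mulVec hn hJspan fun α => (hvanish α).1
  · exact horizontal_eq_zero_of_span_mulVec hn hJspan fun α => (hvanish α).2.1

/-- Let `n ≥ 4`, `u` the Bowl soliton profile (C² on `[0,∞)`,
`u(0) = u'(0) = 0`, `u'' ≥ 0`, satisfying `u''/(1+u'²) + (n−1)u'/r = 1`), `{J_α}` an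
orthonormal basis of `so(n−1)`, `A` skew-symmetric and orthogonal to `so(n−1) ⊕ so(2)`
(equivalently, `A_{ij} = 0` whenever both `i, j ≤ n−1` and whenever both
`i, j ∈ {n, n+1}`), and `c_α ∈ ℝ^{n+1}` with vanishing last two coordinates.  If
`⟨[A, J_α]x + c_α, ν(x)⟩ = 0` for every `x` in some nonempty relatively open subset `U` of
`M = Bowl^{n−1} × ℝ` consisting of points with `x̄ ≠ 0` (with
`ν(x) = (1+u'²)^{−1/2}(u' x̄/|x̄|, −1, 0)`), then `A = 0` and all `c_α = 0`. -/
theorem bowl_bracket_vector_fields_vanish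
    (n : ℕ) (hn : 4 ≤ n)
    (u : ℝ → ℝ)
    (huC2 : ContDiffOn ℝ 2 u (Set.Ici 0))
    (hu0 : u 0 = 0)
    (hu'0 : derivWithin u (Set.Ici 0) 0 = 0)
    (hu'' : ∀ r ≥ (0:ℝ), 0 ≤ derivWithin (derivWithin u (Set.Ici 0)) (Set.Ici 0) r)
    (hODE : ∀ r > (0:ℝ),
      derivWithin (derivWithin u (Set.Ici 0)) (Set.Ici 0) r
          / (1 + (derivWithin u (Set.Ici 0) r) ^ 2)
        + (n - 1 : ℝ) * derivWithin u (Set.Ici 0) r / r = 1)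
    (J : Fin ((n - 1) * (n - 2) / 2) → Matrix (Fin (n + 1)) (Fin (n + 1)) ℝ)
    (hJmem : ∀ α, memSOnm1 n (J α))
    (hJorth : ∀ α β, Matrix.trace (J α * (J β)ᵀ) = if α = β then 1 else 0)
    (hJspan : ∀ B, memSOnm1 n B →
      ∃ c : Fin ((n - 1) * (n - 2) / 2) → ℝ, B = ∑ α, c α • J α)
    (A : Matrix (Fin (n + 1)) (Fin (n + 1)) ℝ)
    (hAskew : Aᵀ = -A)
    (hAperp : ∀ i j : Fin (n + 1),
      (((i : ℕ) < n - 1 ∧ (j : ℕ) < n - 1) ∨ (n - 1 ≤ (i : ℕ) ∧ n - 1 ≤ (j : ℕ))) →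
      A i j = 0)
    (c : Fin ((n - 1) * (n - 2) / 2) → Fin (n + 1) → ℝ)
    (hc : ∀ α, ∀ i : Fin (n + 1), n - 1 ≤ (i : ℕ) → c α i = 0)
    (U : Set (Fin (n + 1) → ℝ))
    (hUsub : U ⊆ bowlTimesR n u)
    (hUxbar : ∀ x ∈ U, 0 < rbar n x)
    (hUrelOpen : ∃ V : Set (Fin (n + 1) → ℝ), IsOpen V ∧ U = V ∩ bowlTimesR n u)
    (hUne : U.Nonempty)
    (hnormal : ∀ x ∈ U, ∀ α,
      (Real.sqrt (1 + (derivWithin u (Set.Ici 0) (rbar n x)) ^ 2))⁻¹ *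
        ((∑ i ∈ Finset.univ.filter (fun i : Fin (n + 1) => (i : ℕ) < n - 1),
            ((A * J α - J α * A).mulVec x i + c α i) *
              (derivWithin u (Set.Ici 0) (rbar n x) * x i / rbar n x))
          - ((A * J α - J α * A).mulVec x ⟨n - 1, by omega⟩ + c α ⟨n - 1, by omega⟩)) = 0) :
    A = 0 ∧ ∀ α, c α = 0 := by
  obtain ⟨V, hV, rfl⟩ := hUrelOpen
  exact bowl_bracket_vector_fields_vanish_general (by omega)
    (IsTranslatorProfileOn.of_contDiffOn_Ici huC2 hODE) hJmem
    (fun B hB => (Submodule.mem_span_range_iff_exists_fun ℝ).mpr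
      ((hJspan B hB).imp fun _ => Eq.symm))
    hAskew hAperp hc hV hUne hUxbar hnormal
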